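/- (Conditional expected distortion depends only on (R¹_t, Z¹_t).) Fix arbitrary deterministic encoding rules f²_{1:T}, memory update rules l¹_{1:T}, l²_{1:T}, decoding rules g_{1:T}, and a deterministic encoding strategy for encoder 1. Then for every t there is a deterministic function ρ̂_t such that for every realization (x_{1:t}, z_{1:t}) of (X¹_{1:t}, Z¹_{1:t}) with positive probability, E[ρ_t(X_t, X̂_t) | X¹_{1:t} = x_{1:t}, Z¹_{1:t} = z_{1:t}] = ρ̂_t(x_t, b¹_t, μ¹_t, z_t), where b¹_t and μ¹_t are the beliefs computed from x_{1:t} and z_{1:t-1} respectively; in particular, two positive-probability histories that induce the same (x_t, b¹_t, μ¹_t, z_t) have the same conditional expected distortion. -/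

import Mathlib

/-!
Given `A`, encoder 1's source, encoder 2's source and the two noise sequences are independent.
On a possible history `(xs, zs)` the symbols of encoder 1 are frozen to `zs`, so the distortion
at time `t` becomes a function of `A`, encoder 2's variables, the current noise of channel 1 and
the channel-1 memory `memZ`, which depends only on the earlier noise of channel 1. Integrating
out encoder 2's variables (`innerD`) and the current noise leaves

`∑ a, P(A = a, X¹ = xs) * ∑ m, P(memZ = m) * ∑ v, q1 t v * innerD …`.

Dividing by the probability of the history turns the first weights into the belief on `A`; here
conditioning on `zs` adds nothing because encoder 1 is deterministic. The second weights are the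
belief on the memory, because encoder 1's source is independent of the noise of channel 1
(`sum_jointP_noise`). The independence of current noise and memory is `sum_noise_mem`, and
`sum_jointP` is Fubini for the joint law.
-/

open Finset

namespace MTC

noncomputable section

/-- Probability of an event `E` under the weight function `p` on a finite sample space. -/
def Pr {Ω : Type*} [Fintype Ω] (p : Ω → ℝ) (E : Set Ω) : ℝ :=
  ∑ ω, E.indicator p ω

/-- Conditional probability `P(E ∣ F)`. -/
def cPr {Ω : Type*} [Fintype Ω] (p : Ω → ℝ) (E F : Set Ω) : ℝ :=
  Pr p (E ∩ F) / Pr p F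

/-- Conditional expectation `E[φ ∣ F]`. -/
def cExp {Ω : Type*} [Fintype Ω] (p : Ω → ℝ) (φ : Ω → ℝ) (F : Set Ω) : ℝ :=
  (∑ ω, F.indicator (fun ω' => p ω' * φ ω') ω) / Pr p F

/-- Extension of a trajectory `x : Fin T → X` to all of `ℕ` (junk after time `T-1`). -/
def pad {X : Type*} [Inhabited X] {T : ℕ} (x : Fin T → X) (n : ℕ) : X :=
  if h : n < T then x ⟨n, h⟩ else default

/-- A deterministic encoding strategy: at each (0-indexed) time `t` the transmitted symbol
is an arbitrary function of the observation history `X_{0:t}` and the past transmitted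
symbols `Z_{0:t-1}`. -/
abbrev Strat (X Z : Type*) := (t : ℕ) → (Fin (t + 1) → X) → (Fin t → Z) → Z

/-- The transmitted-symbol process generated by strategy `f` on observation path `x`. -/
def Zseq {X Z : Type*} (f : Strat X Z) (x : ℕ → X) : ℕ → Z
  | t => f t (fun i => x i.val) (fun i => Zseq f x i.val)
  termination_by t => t
  decreasing_by exact i.isLt

/-- The receiver-memory process: `Mseq l y t` is the memory content `M_{t-1}` of the paper
(after the symbols `y_0, …, y_{t-1}` have been processed), with the convention
`M_0 := default` (the paper's `M_0 := 0`). -/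
def Mseq {Y M : Type*} [Inhabited M] (l : ℕ → M → Y → M) (y : ℕ → Y) : ℕ → M
  | 0 => default
  | t + 1 => l t (Mseq l y t) (y t)

/-- Weight of a trajectory of a (time-inhomogeneous) Markov chain with initial law
`init a` and transition kernels `K t a`, for a given value `a` of the coupling
random variable. -/
def chainW {A X : Type*} [Inhabited X] (T : ℕ) (init : A → X → ℝ)
    (K : ℕ → A → X → X → ℝ) (a : A) (x : Fin T → X) : ℝ :=
  if T = 0 then 1
  else init a (pad x 0) * ∏ t ∈ Finset.range (T - 1), K t a (pad x t) (pad x (t + 1))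

/-- Canonical sample space: the coupling variable `A`, the two source trajectories and
the two channel-noise trajectories. -/
abbrev Samp (A X1 X2 N1 N2 : Type*) (T : ℕ) :=
  A × (Fin T → X1) × (Fin T → X2) × (Fin T → N1) × (Fin T → N2)

variable {A X1 X2 Z1 Z2 N1 N2 Y1 Y2 M1 M2 : Type*}

/-- The joint law of `(A, X¹_{1:T}, X²_{1:T}, N¹_{1:T}, N²_{1:T})`:
`P(X¹_1, X²_1, A) = P(X¹_1|A) P(X²_1|A) P(A)`, conditioned on `A` the two source
components are independent Markov chains with kernels `K1, K2`, and the channel noises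
are mutually independent and independent of the source. -/
def jointP [Inhabited X1] [Inhabited X2] (T : ℕ)
    (pA : A → ℝ) (init1 : A → X1 → ℝ) (K1 : ℕ → A → X1 → X1 → ℝ)
    (init2 : A → X2 → ℝ) (K2 : ℕ → A → X2 → X2 → ℝ)
    (q1 : ℕ → N1 → ℝ) (q2 : ℕ → N2 → ℝ) : Samp A X1 X2 N1 N2 T → ℝ :=
  fun ω =>
    pA ω.1 * chainW T init1 K1 ω.1 ω.2.1 * chainW T init2 K2 ω.1 ω.2.2.1 *
      (∏ t : Fin T, q1 t.val (ω.2.2.2.1 t)) * (∏ t : Fin T, q2 t.val (ω.2.2.2.2 t))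

variable (T : ℕ)

/-- Encoder 1's transmitted symbol `Z¹_t` (a deterministic function of `X¹_{0:t}`). -/
def Z1f [Inhabited X1] (f1 : Strat X1 Z1) (ω : Samp A X1 X2 N1 N2 T) : ℕ → Z1 :=
  Zseq f1 (pad ω.2.1)

/-- Encoder 2's transmitted symbol `Z²_t`. -/
def Z2f [Inhabited X2] (f2 : Strat X2 Z2) (ω : Samp A X1 X2 N1 N2 T) : ℕ → Z2 :=
  Zseq f2 (pad ω.2.2.1)

/-- Channel-1 output `Y¹_t = h¹_t(Z¹_t, N¹_t)`. -/
def Y1f [Inhabited X1] [Inhabited N1] (h1 : ℕ → Z1 → N1 → Y1) (f1 : Strat X1 Z1)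
    (ω : Samp A X1 X2 N1 N2 T) : ℕ → Y1 :=
  fun t => h1 t (Z1f T f1 ω t) (pad ω.2.2.2.1 t)

/-- Channel-2 output `Y²_t = h²_t(Z²_t, N²_t)`. -/
def Y2f [Inhabited X2] [Inhabited N2] (h2 : ℕ → Z2 → N2 → Y2) (f2 : Strat X2 Z2)
    (ω : Samp A X1 X2 N1 N2 T) : ℕ → Y2 :=
  fun t => h2 t (Z2f T f2 ω t) (pad ω.2.2.2.2 t)

/-- Receiver memory `M¹_{t-1}` for channel 1. -/
def M1f [Inhabited X1] [Inhabited N1] [Inhabited M1] (h1 : ℕ → Z1 → N1 → Y1)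
    (f1 : Strat X1 Z1) (l1 : ℕ → M1 → Y1 → M1) (ω : Samp A X1 X2 N1 N2 T) : ℕ → M1 :=
  Mseq l1 (Y1f T h1 f1 ω)

/-- Receiver memory `M²_{t-1}` for channel 2. -/
def M2f [Inhabited X2] [Inhabited N2] [Inhabited M2] (h2 : ℕ → Z2 → N2 → Y2)
    (f2 : Strat X2 Z2) (l2 : ℕ → M2 → Y2 → M2) (ω : Samp A X1 X2 N1 N2 T) : ℕ → M2 :=
  Mseq l2 (Y2f T h2 f2 ω)

/-- The receiver's estimate `X̂_t = g_t(Y¹_t, Y²_t, M¹_{t-1}, M²_{t-1})`. -/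
def estf [Inhabited X1] [Inhabited X2] [Inhabited N1] [Inhabited N2]
    [Inhabited M1] [Inhabited M2]
    (h1 : ℕ → Z1 → N1 → Y1) (h2 : ℕ → Z2 → N2 → Y2)
    (f1 : Strat X1 Z1) (f2 : Strat X2 Z2)
    (l1 : ℕ → M1 → Y1 → M1) (l2 : ℕ → M2 → Y2 → M2)
    (g : ℕ → Y1 → Y2 → M1 → M2 → X1 × X2 × A) (ω : Samp A X1 X2 N1 N2 T) :
    ℕ → X1 × X2 × A :=
  fun t => g t (Y1f T h1 f1 ω t) (Y2f T h2 f2 ω t) (M1f T h1 f1 l1 ω t) (M2f T h2 f2 l2 ω t)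

/-- The state `X_t = (X¹_t, X²_t, A)` of the source. -/
def Xst [Inhabited X1] [Inhabited X2] (ω : Samp A X1 X2 N1 N2 T) (t : ℕ) : X1 × X2 × A :=
  (pad ω.2.1 t, pad ω.2.2.1 t, ω.1)

/-- Expected total distortion `J = E[∑_{t=1}^T ρ_t(X_t, X̂_t)]`. -/
def J [Fintype A] [Fintype X1] [Fintype X2] [Fintype N1] [Fintype N2]
    [Inhabited X1] [Inhabited X2] [Inhabited N1] [Inhabited N2]
    [Inhabited M1] [Inhabited M2]
    (p : Samp A X1 X2 N1 N2 T → ℝ)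
    (h1 : ℕ → Z1 → N1 → Y1) (h2 : ℕ → Z2 → N2 → Y2)
    (ρ : ℕ → X1 × X2 × A → X1 × X2 × A → ℝ)
    (f1 : Strat X1 Z1) (f2 : Strat X2 Z2)
    (g : ℕ → Y1 → Y2 → M1 → M2 → X1 × X2 × A)
    (l1 : ℕ → M1 → Y1 → M1) (l2 : ℕ → M2 → Y2 → M2) : ℝ :=
  ∑ ω, p ω * ∑ t ∈ Finset.range T, ρ t (Xst T ω t) (estf T h1 h2 f1 f2 l1 l2 g ω t)

/-- Encoder 1's belief on `A`: `b¹_t(a) = P(A = a ∣ X¹_{0:t} = xs_{0:t})`. -/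
def belA [Fintype A] [Fintype X1] [Fintype X2] [Fintype N1] [Fintype N2]
    [Inhabited X1]
    (p : Samp A X1 X2 N1 N2 T → ℝ) (t : ℕ) (xs : ℕ → X1) : A → ℝ :=
  fun a => cPr p {ω : Samp A X1 X2 N1 N2 T | ω.1 = a} {ω | ∀ s ≤ t, pad ω.2.1 s = xs s}

/-- Encoder 1's belief on the receiver memory:
`μ¹_t(m) = P(M¹_{t-1} = m ∣ Z¹_{0:t-1} = zs_{0:t-1})`. -/
def belM [Fintype A] [Fintype X1] [Fintype X2] [Fintype N1] [Fintype N2]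
    [Inhabited X1] [Inhabited N1] [Inhabited M1]
    (p : Samp A X1 X2 N1 N2 T → ℝ) (h1 : ℕ → Z1 → N1 → Y1)
    (f1 : Strat X1 Z1) (l1 : ℕ → M1 → Y1 → M1) (t : ℕ) (zs : ℕ → Z1) : M1 → ℝ :=
  fun m =>
    cPr p {ω : Samp A X1 X2 N1 N2 T | M1f T h1 f1 l1 ω t = m}
      {ω | ∀ s < t, Z1f T f1 ω s = zs s}

/-- Encoder 2's belief on `A`. -/
def belA2 [Fintype A] [Fintype X1] [Fintype X2] [Fintype N1] [Fintype N2]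
    [Inhabited X2]
    (p : Samp A X1 X2 N1 N2 T → ℝ) (t : ℕ) (xs : ℕ → X2) : A → ℝ :=
  fun a => cPr p {ω : Samp A X1 X2 N1 N2 T | ω.1 = a} {ω | ∀ s ≤ t, pad ω.2.2.1 s = xs s}

/-- Encoder 2's belief on the receiver memory. -/
def belM2 [Fintype A] [Fintype X1] [Fintype X2] [Fintype N1] [Fintype N2]
    [Inhabited X2] [Inhabited N2] [Inhabited M2]
    (p : Samp A X1 X2 N1 N2 T → ℝ) (h2 : ℕ → Z2 → N2 → Y2)
    (f2 : Strat X2 Z2) (l2 : ℕ → M2 → Y2 → M2) (t : ℕ) (zs : ℕ → Z2) : M2 → ℝ :=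
  fun m =>
    cPr p {ω : Samp A X1 X2 N1 N2 T | M2f T h2 f2 l2 ω t = m}
      {ω | ∀ s < t, Z2f T f2 ω s = zs s}

end

/-! ### Causality of the encoder and of the receiver memory -/

theorem Zseq_congr {X Z : Type*} (f : Strat X Z) {x y : ℕ → X} (t : ℕ)
    (h : ∀ s ≤ t, x s = y s) : Zseq f x t = Zseq f y t := by
  induction t using Nat.strong_induction_on with
  | _ t ih =>
    rw [Zseq, Zseq]
    congr 1
    · funext i
      exact h i (by omega)
    · funext i
      exact ih i i.isLt fun s hs => h s (by omega)

theorem Mseq_congr {Y M : Type*} [Inhabited M] (l : ℕ → M → Y → M) {y y' : ℕ → Y} (t : ℕ)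
    (h : ∀ s < t, y s = y' s) : Mseq l y t = Mseq l y' t := by
  induction t with
  | zero => rfl
  | succ t ih =>
    rw [Mseq, Mseq, ih fun s hs => h s (by omega), h t (by omega)]

/-! ### Normalisation and nonnegativity of the trajectory laws -/

theorem pad_cons_zero {X : Type*} [Inhabited X] {k : ℕ} (x : X) (r : Fin k → X) :
    pad (Fin.cons x r : Fin (k + 1) → X) 0 = x := by
  simp [pad]

theorem pad_cons_succ {X : Type*} [Inhabited X] {k : ℕ} (x : X) (r : Fin k → X) (n : ℕ) :
    pad (Fin.cons x r : Fin (k + 1) → X) (n + 1) = pad r n := by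
  unfold pad
  by_cases h : n < k
  · rw [dif_pos h, dif_pos (by omega)]
    exact Fin.cons_succ (α := fun _ => X) x r ⟨n, h⟩
  · rw [dif_neg h, dif_neg (by omega)]

/-- Total mass of a Markov chain. The induction peels off the first state `x`, after which the
remaining trajectory is a chain with initial law `K 0 x` and kernels shifted by one. -/
theorem sum_chain {X : Type*} [Fintype X] [Inhabited X] (k : ℕ) :
    ∀ (init : X → ℝ) (K : ℕ → X → X → ℝ), ∑ x, init x = 1 →
      (∀ t x, ∑ x', K t x x' = 1) →
      ∑ x : Fin (k + 1) → X,
        init (pad x 0) * ∏ t ∈ range k, K t (pad x t) (pad x (t + 1)) = 1 := by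
  induction k with
  | zero =>
    intro init K hi _
    rw [← (Fin.consEquiv (fun _ : Fin 1 => X)).sum_comp, Fintype.sum_prod_type]
    simp [Fin.consEquiv, pad_cons_zero, hi]
  | succ k ih =>
    intro init K hi hK
    rw [← (Fin.consEquiv (fun _ : Fin (k + 2) => X)).sum_comp, Fintype.sum_prod_type, ← hi]
    refine sum_congr rfl fun x _ => ?_
    have := ih (K 0 x) (fun t => K (t + 1)) (hK 0 x) (fun t => hK (t + 1))
    simp only [Fin.consEquiv, Equiv.coe_fn_mk, pad_cons_zero, prod_range_succ', pad_cons_succ]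
    rw [← mul_sum]
    conv_rhs => rw [← mul_one (init x), ← this]
    congr 1
    refine sum_congr rfl fun r _ => ?_
    ring

theorem sum_chainW {A X : Type*} [Fintype X] [Inhabited X] {T : ℕ} (hT : 0 < T)
    (init : A → X → ℝ) (K : ℕ → A → X → X → ℝ) (a : A) (hi : ∑ x, init a x = 1)
    (hK : ∀ t x, ∑ x', K t a x x' = 1) : ∑ x, chainW T init K a x = 1 := by
  obtain ⟨k, rfl⟩ : ∃ k, T = k + 1 := ⟨T - 1, by omega⟩
  simpa [chainW] using sum_chain k (init a) (fun t => K t a) hi hK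

theorem chainW_nonneg {A X : Type*} [Inhabited X] (T : ℕ)
    (init : A → X → ℝ) (K : ℕ → A → X → X → ℝ) (a : A) (hi : ∀ x, 0 ≤ init a x)
    (hK : ∀ t x x', 0 ≤ K t a x x') (x : Fin T → X) : 0 ≤ chainW T init K a x := by
  unfold chainW
  split_ifs
  · exact zero_le_one
  · exact mul_nonneg (hi _) (prod_nonneg fun t _ => hK _ _ _)

theorem sum_noise {N : Type*} [Fintype N] {T : ℕ} (q : ℕ → N → ℝ)
    (hq : ∀ t, ∑ n, q t n = 1) : ∑ n : Fin T → N, ∏ s : Fin T, q s (n s) = 1 := by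
  have := prod_univ_sum (fun _ : Fin T => (univ : Finset N)) (fun s n => q s n)
  rw [Fintype.piFinset_univ] at this
  rw [← this]
  simp [hq]

/-! ### Independence of the current noise from the receiver memory -/

/-- Under a product law, a function `F` not depending on coordinate `t` is independent of any
function of coordinate `t`. -/
theorem sum_noise_split {N : Type*} [Fintype N] [Inhabited N] {T : ℕ} (q : ℕ → N → ℝ)
    (hq : ∀ t, ∑ n, q t n = 1) (t : Fin T) (F : (Fin T → N) → ℝ)
    (hF : ∀ n n', (∀ s, s ≠ t → n s = n' s) → F n = F n') (G : N → ℝ) :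
    ∑ n, (∏ s : Fin T, q s (n s)) * (F n * G (n t)) =
      (∑ n, (∏ s : Fin T, q s (n s)) * F n) * ∑ v, q t v * G v := by
  classical
  have key : ∀ G : N → ℝ, ∑ n, (∏ s : Fin T, q s (n s)) * (F n * G (n t)) =
      (∑ v, q t v * G v) * ∑ r : {j // j ≠ t} → N, (∏ s : {j // j ≠ t}, q s.1 (r s)) *
        F ((Equiv.funSplitAt t N).symm (default, r)) := by
    intro G
    rw [← (Equiv.funSplitAt t N).symm.sum_comp, Fintype.sum_prod_type, sum_mul]
    refine sum_congr rfl fun v _ => ?_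
    rw [mul_sum]
    refine sum_congr rfl fun r _ => ?_
    have h1 : F ((Equiv.funSplitAt t N).symm (v, r)) =
        F ((Equiv.funSplitAt t N).symm (default, r)) := by
      apply hF
      intro s hs
      simp [Equiv.funSplitAt, Equiv.piSplitAt, hs]
    have h2 : (Equiv.funSplitAt t N).symm (v, r) t = v := by
      simp [Equiv.funSplitAt, Equiv.piSplitAt]
    have h3 : ∏ s : Fin T, q s ((Equiv.funSplitAt t N).symm (v, r) s) =
        q t v * ∏ s : {j // j ≠ t}, q s.1 (r s) := by
      rw [Fintype.prod_eq_mul_prod_subtype_ne _ t, h2]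
      congr 1
      refine prod_congr rfl fun s _ => ?_
      simp [Equiv.funSplitAt, Equiv.piSplitAt, s.2]
    rw [h1, h2, h3]
    ring
  have h1 := key fun _ => 1
  simp only [mul_one, hq, one_mul] at h1
  rw [key G, h1, mul_comm]

/-- Averaging a function of the current noise symbol and of the memory `mem`, when the memory
ignores the current noise symbol: the memory may be averaged under its own law. -/
theorem sum_noise_mem {N M : Type*} [Fintype N] [Inhabited N] [Fintype M] {T : ℕ}
    (q : ℕ → N → ℝ) (hq : ∀ t, ∑ n, q t n = 1) (t : Fin T) (mem : (Fin T → N) → M)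
    (hmem : ∀ n n', (∀ s, s ≠ t → n s = n' s) → mem n = mem n') (φ : N → M → ℝ) :
    ∑ n, (∏ s : Fin T, q s (n s)) * φ (n t) (mem n) =
      ∑ m, (∑ n, (∏ s : Fin T, q s (n s)) * {n | mem n = m}.indicator 1 n) *
        ∑ v, q t v * φ v m := by
  classical
  have h : ∀ m, _ := fun m => sum_noise_split q hq t ({n | mem n = m}.indicator 1)
    (fun n n' hn => by simp [Set.indicator, hmem n n' hn]) (fun v => φ v m)
  simp_rw [← h]
  rw [sum_comm]
  refine sum_congr rfl fun n _ => ?_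
  simp [Set.indicator_apply]

/-! ### Integration against the joint law -/

/-- Fubini for the joint law, for integrands that separate encoder 1's source from the
remaining variables once `A` is fixed. -/
theorem sum_jointP {A X1 X2 N1 N2 : Type*}
    [Fintype A] [Fintype X1] [Fintype X2] [Fintype N1] [Fintype N2]
    [Inhabited X1] [Inhabited X2] (T : ℕ)
    (pA : A → ℝ) (init1 : A → X1 → ℝ) (K1 : ℕ → A → X1 → X1 → ℝ)
    (init2 : A → X2 → ℝ) (K2 : ℕ → A → X2 → X2 → ℝ)
    (q1 : ℕ → N1 → ℝ) (q2 : ℕ → N2 → ℝ) (U : A → (Fin T → X1) → ℝ)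
    (Φ : A → (Fin T → X2) → (Fin T → N1) → (Fin T → N2) → ℝ) :
    ∑ ω : Samp A X1 X2 N1 N2 T, jointP T pA init1 K1 init2 K2 q1 q2 ω *
        (U ω.1 ω.2.1 * Φ ω.1 ω.2.2.1 ω.2.2.2.1 ω.2.2.2.2) =
      ∑ a, (∑ x1, pA a * chainW T init1 K1 a x1 * U a x1) *
        ∑ n1 : Fin T → N1, (∏ s : Fin T, q1 s (n1 s)) *
          ∑ x2, ∑ n2 : Fin T → N2, chainW T init2 K2 a x2 * (∏ s : Fin T, q2 s (n2 s)) *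
            Φ a x2 n1 n2 := by
  simp only [Fintype.sum_prod_type, jointP]
  refine sum_congr rfl fun a _ => ?_
  rw [sum_mul]
  refine sum_congr rfl fun x1 _ => ?_
  rw [sum_comm, mul_sum]
  refine sum_congr rfl fun n1 _ => ?_
  rw [mul_sum, mul_sum]
  refine sum_congr rfl fun x2 _ => ?_
  rw [mul_sum, mul_sum]
  refine sum_congr rfl fun n2 _ => ?_
  ring

/-- Encoder 1's source and the noise of channel 1 are independent. -/
theorem sum_jointP_noise {A X1 X2 N1 N2 : Type*}
    [Fintype A] [Fintype X1] [Fintype X2] [Fintype N1] [Fintype N2]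
    [Inhabited X1] [Inhabited X2] {T : ℕ} (hT : 0 < T)
    (pA : A → ℝ) (init1 : A → X1 → ℝ) (K1 : ℕ → A → X1 → X1 → ℝ)
    (init2 : A → X2 → ℝ) (K2 : ℕ → A → X2 → X2 → ℝ)
    (q1 : ℕ → N1 → ℝ) (q2 : ℕ → N2 → ℝ)
    (hinit2 : ∀ a, ∑ x, init2 a x = 1) (hK2 : ∀ t a x, ∑ x', K2 t a x x' = 1)
    (hq2 : ∀ t, ∑ n, q2 t n = 1)
    (U : A → (Fin T → X1) → ℝ) (V : (Fin T → N1) → ℝ) :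
    ∑ ω : Samp A X1 X2 N1 N2 T, jointP T pA init1 K1 init2 K2 q1 q2 ω *
        (U ω.1 ω.2.1 * V ω.2.2.2.1) =
      (∑ a, ∑ x1, pA a * chainW T init1 K1 a x1 * U a x1) *
        ∑ n1 : Fin T → N1, (∏ s : Fin T, q1 s (n1 s)) * V n1 := by
  rw [sum_jointP T pA init1 K1 init2 K2 q1 q2 U (fun _ _ n1 _ => V n1), sum_mul]
  refine sum_congr rfl fun a _ => ?_
  congr 1
  refine sum_congr rfl fun n1 _ => ?_
  simp_rw [← sum_mul, ← mul_sum]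
  rw [sum_noise q2 hq2, ← sum_mul, sum_chainW hT init2 K2 a (hinit2 a) (fun t => hK2 t a)]
  ring

theorem jointP_nonneg {A X1 X2 N1 N2 : Type*} [Inhabited X1] [Inhabited X2] (T : ℕ)
    (pA : A → ℝ) (init1 : A → X1 → ℝ) (K1 : ℕ → A → X1 → X1 → ℝ)
    (init2 : A → X2 → ℝ) (K2 : ℕ → A → X2 → X2 → ℝ)
    (q1 : ℕ → N1 → ℝ) (q2 : ℕ → N2 → ℝ)
    (hpA : ∀ a, 0 ≤ pA a)
    (hinit1 : ∀ a x, 0 ≤ init1 a x) (hK1 : ∀ t a x x', 0 ≤ K1 t a x x')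
    (hinit2 : ∀ a x, 0 ≤ init2 a x) (hK2 : ∀ t a x x', 0 ≤ K2 t a x x')
    (hq1 : ∀ t n, 0 ≤ q1 t n) (hq2 : ∀ t n, 0 ≤ q2 t n) (ω : Samp A X1 X2 N1 N2 T) :
    0 ≤ jointP T pA init1 K1 init2 K2 q1 q2 ω := by
  have h1 := chainW_nonneg T init1 K1 ω.1 (hinit1 _) (fun t => hK1 t _) ω.2.1
  have h2 := chainW_nonneg T init2 K2 ω.1 (hinit2 _) (fun t => hK2 t _) ω.2.2.1
  exact mul_nonneg (mul_nonneg (mul_nonneg (mul_nonneg (hpA _) h1) h2)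
    (prod_nonneg fun _ _ => hq1 _ _)) (prod_nonneg fun _ _ => hq2 _ _)

theorem Pr_mono {Ω : Type*} [Fintype Ω] {p : Ω → ℝ} (hp : ∀ ω, 0 ≤ p ω) {E F : Set Ω}
    (h : E ⊆ F) : Pr p E ≤ Pr p F :=
  sum_le_sum fun ω _ => Set.indicator_le_indicator_of_subset h hp ω

/-- An event of positive probability is nonempty. -/
theorem exists_mem_of_Pr_pos {Ω : Type*} [Fintype Ω] {p : Ω → ℝ} {E : Set Ω}
    (h : 0 < Pr p E) : ∃ ω, ω ∈ E := by
  by_contra hE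
  push Not at hE
  have : Pr p E = 0 := sum_eq_zero fun ω _ => Set.indicator_of_notMem (hE ω) p
  linarith

theorem Pr_eq_sum {Ω : Type*} [Fintype Ω] (p u : Ω → ℝ) (E : Set Ω)
    (h : ∀ ω, E.indicator 1 ω = u ω) : Pr p E = ∑ ω, p ω * u ω := by
  classical
  refine sum_congr rfl fun ω _ => ?_
  rw [← h ω]
  simp [Set.indicator_apply]

/-! ### The conditional distortion as a function of the beliefs -/

noncomputable section

/-- Memory of the first receiver channel when the transmitted symbols are frozen to `zs`; it is
then a function of the channel noise only. -/
def memZ {Z1 N1 Y1 M1 : Type*} [Inhabited N1] [Inhabited M1] {T : ℕ}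
    (h1 : ℕ → Z1 → N1 → Y1) (l1 : ℕ → M1 → Y1 → M1) (t : ℕ) (zs : ℕ → Z1)
    (n : Fin T → N1) : M1 :=
  Mseq l1 (fun s => h1 s (zs s) (pad n s)) t

/-- Distortion at time `t`, averaged over encoder 2's source and noise, given `A = a`, current
source symbol `x`, channel-1 output `y` and channel-1 memory `m`. -/
def innerD {A X1 X2 Z2 N2 Y1 Y2 M1 M2 : Type*} [Fintype X2] [Fintype N2]
    [Inhabited X2] [Inhabited N2] [Inhabited M2] (T : ℕ)
    (init2 : A → X2 → ℝ) (K2 : ℕ → A → X2 → X2 → ℝ) (q2 : ℕ → N2 → ℝ)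
    (h2 : ℕ → Z2 → N2 → Y2) (ρ : ℕ → X1 × X2 × A → X1 × X2 × A → ℝ)
    (f2 : Strat X2 Z2) (g : ℕ → Y1 → Y2 → M1 → M2 → X1 × X2 × A)
    (l2 : ℕ → M2 → Y2 → M2) (t : ℕ) (x : X1) (a : A) (y : Y1) (m : M1) : ℝ :=
  ∑ x2 : Fin T → X2, ∑ n2 : Fin T → N2,
    chainW T init2 K2 a x2 * (∏ s : Fin T, q2 s (n2 s)) *
      ρ t (x, pad x2 t, a)
        (g t y (h2 t (Zseq f2 (pad x2) t) (pad n2 t)) m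
          (Mseq l2 (fun s => h2 s (Zseq f2 (pad x2) s) (pad n2 s)) t))

end

theorem memZ_congr {Z1 N1 Y1 M1 : Type*} [Inhabited N1] [Inhabited M1] {T : ℕ}
    (h1 : ℕ → Z1 → N1 → Y1) (l1 : ℕ → M1 → Y1 → M1) (t : Fin T) (zs : ℕ → Z1)
    (n n' : Fin T → N1) (h : ∀ s, s ≠ t → n s = n' s) :
    memZ h1 l1 t zs n = memZ h1 l1 t zs n' := by
  refine Mseq_congr _ _ fun s hs => ?_
  have hsT : s < T := hs.trans t.isLt
  have : pad n s = pad n' s := by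
    simp only [pad, dif_pos hsT]
    exact h _ fun h => by simp [← h] at hs
  simp only [this]


/-- **Lemma 4 of the paper.** For fixed strategies of encoder 2 and of the receiver and
a fixed deterministic encoding strategy of encoder 1, the conditional expected
instantaneous distortion given encoder 1's history `(X¹_{0:t}, Z¹_{0:t})` depends on the
history only through `(X¹_t, b¹_t, μ¹_t, Z¹_t)`:
`E[ρ_t(X_t, X̂_t) ∣ X¹_{0:t}, Z¹_{0:t}] = ρ̂_t(X¹_t, b¹_t, μ¹_t, Z¹_t)`. -/
theorem conditional_distortion_function_of_R_and_Z
    {A X1 X2 Z1 Z2 N1 N2 Y1 Y2 M1 M2 : Type*}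
    [Fintype A] [Fintype X1] [Fintype X2] [Fintype Z1] [Fintype Z2]
    [Fintype N1] [Fintype N2] [Fintype Y1] [Fintype Y2] [Fintype M1] [Fintype M2]
    [Inhabited X1] [Inhabited X2] [Inhabited N1] [Inhabited N2]
    [Inhabited M1] [Inhabited M2]
    (T : ℕ)
    (pA : A → ℝ) (init1 : A → X1 → ℝ) (K1 : ℕ → A → X1 → X1 → ℝ)
    (init2 : A → X2 → ℝ) (K2 : ℕ → A → X2 → X2 → ℝ)
    (q1 : ℕ → N1 → ℝ) (q2 : ℕ → N2 → ℝ)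
    (h1 : ℕ → Z1 → N1 → Y1) (h2 : ℕ → Z2 → N2 → Y2)
    (ρ : ℕ → X1 × X2 × A → X1 × X2 × A → ℝ)
    (hpA : (∀ a, 0 ≤ pA a) ∧ ∑ a, pA a = 1)
    (hinit1 : ∀ a, (∀ x, 0 ≤ init1 a x) ∧ ∑ x, init1 a x = 1)
    (hK1 : ∀ t a x, (∀ x', 0 ≤ K1 t a x x') ∧ ∑ x', K1 t a x x' = 1)
    (hinit2 : ∀ a, (∀ x, 0 ≤ init2 a x) ∧ ∑ x, init2 a x = 1)
    (hK2 : ∀ t a x, (∀ x', 0 ≤ K2 t a x x') ∧ ∑ x', K2 t a x x' = 1)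
    (hq1 : ∀ t, (∀ n, 0 ≤ q1 t n) ∧ ∑ n, q1 t n = 1)
    (hq2 : ∀ t, (∀ n, 0 ≤ q2 t n) ∧ ∑ n, q2 t n = 1)
    (hρ : ∀ t x x', 0 ≤ ρ t x x')
    -- arbitrary fixed strategies of the two encoders and of the receiver
    (f1 : Strat X1 Z1) (f2 : Strat X2 Z2)
    (g : ℕ → Y1 → Y2 → M1 → M2 → X1 × X2 × A)
    (l1 : ℕ → M1 → Y1 → M1) (l2 : ℕ → M2 → Y2 → M2) :
    ∃ ρhat : ℕ → X1 → (A → ℝ) → (M1 → ℝ) → Z1 → ℝ,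
      ∀ t < T, ∀ (xs : ℕ → X1) (zs : ℕ → Z1),
        0 < Pr (jointP T pA init1 K1 init2 K2 q1 q2)
            {ω : Samp A X1 X2 N1 N2 T |
              (∀ s ≤ t, pad ω.2.1 s = xs s) ∧ (∀ s ≤ t, Z1f T f1 ω s = zs s)} →
        cExp (jointP T pA init1 K1 init2 K2 q1 q2)
            (fun ω => ρ t (Xst T ω t) (estf T h1 h2 f1 f2 l1 l2 g ω t))
            {ω : Samp A X1 X2 N1 N2 T |
              (∀ s ≤ t, pad ω.2.1 s = xs s) ∧ (∀ s ≤ t, Z1f T f1 ω s = zs s)} =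
          ρhat t (xs t)
            (belA T (jointP T pA init1 K1 init2 K2 q1 q2) t xs)
            (belM T (jointP T pA init1 K1 init2 K2 q1 q2) h1 f1 l1 t zs) (zs t) := by
  classical
  refine ⟨fun t x b μ z => ∑ a, b a * ∑ m, μ m * ∑ v, q1 t v *
    innerD T init2 K2 q2 h2 ρ f2 g l2 t x a (h1 t z v) m, ?_⟩
  intro t ht xs zs hpos
  have hT : 0 < T := by omega
  set p := jointP T pA init1 K1 init2 K2 q1 q2 with hp
  have hp0 : ∀ ω, 0 ≤ p ω := jointP_nonneg T pA init1 K1 init2 K2 q1 q2 hpA.1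
    (fun a => (hinit1 a).1) (fun t a x => (hK1 t a x).1) (fun a => (hinit2 a).1)
    (fun t a x => (hK2 t a x).1) (fun t => (hq1 t).1) (fun t => (hq2 t).1)
  have hnoise := sum_jointP_noise hT pA init1 K1 init2 K2 q1 q2 (fun a => (hinit2 a).2)
    (fun t a x => (hK2 t a x).2) (fun t => (hq2 t).2)
  -- encoder 1 is deterministic, so a possible history has `zs` generated by `xs`
  have hz : ∀ x1 : Fin T → X1, (∀ s ≤ t, pad x1 s = xs s) →
      ∀ s ≤ t, Zseq f1 (pad x1) s = zs s := by
    obtain ⟨ω, hω1, hω2⟩ := exists_mem_of_Pr_pos hpos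
    intro x1 hx1 s hs
    rw [← hω2 s hs]
    exact Zseq_congr f1 s fun r hr => by rw [hx1 r (by omega), hω1 r (by omega)]
  have hEF : {ω : Samp A X1 X2 N1 N2 T |
      (∀ s ≤ t, pad ω.2.1 s = xs s) ∧ (∀ s ≤ t, Z1f T f1 ω s = zs s)} =
      {ω | ∀ s ≤ t, pad ω.2.1 s = xs s} := by
    ext ω
    exact ⟨fun h => h.1, fun h => ⟨h, hz _ h⟩⟩
  have hposZ : 0 < Pr p {ω : Samp A X1 X2 N1 N2 T | ∀ s < t, Z1f T f1 ω s = zs s} :=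
    hpos.trans_le (Pr_mono hp0 fun ω h s hs => h.2 s hs.le)
  rw [hEF] at hpos ⊢
  set F := {ω : Samp A X1 X2 N1 N2 T | ∀ s ≤ t, pad ω.2.1 s = xs s} with hF
  set U : (Fin T → X1) → ℝ := {x1 | ∀ s ≤ t, pad x1 s = xs s}.indicator 1 with hU
  set α : A → ℝ := fun a => ∑ x1, pA a * chainW T init1 K1 a x1 * U x1 with hα
  set β : M1 → ℝ := fun m => ∑ n : Fin T → N1, (∏ s : Fin T, q1 s (n s)) *
    {n | memZ h1 l1 t zs n = m}.indicator 1 n with hβ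
  have hbelA : ∀ a, belA T p t xs a = α a / Pr p F := by
    intro a
    rw [belA, cPr]
    congr 1
    rw [Pr_eq_sum p (fun ω => ({a} : Set A).indicator 1 ω.1 * U ω.2.1 * 1)]
    · rw [hnoise (fun a' x1 => ({a} : Set A).indicator 1 a' * U x1) (fun _ => 1)]
      simp only [mul_one, sum_noise q1 (fun t => (hq1 t).2)]
      rw [Finset.sum_eq_single a]
      · simp [hα]
      · intro b _ hb
        simp [hb]
      · simp
    · intro ω
      simp only [hU, Set.indicator_apply, Set.mem_inter_iff, Set.mem_ofPred_eq,
        Set.mem_singleton_iff, Pi.one_apply]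
      split_ifs <;> simp_all
  have hbelM : ∀ m, belM T p h1 f1 l1 t zs m = β m := by
    intro m
    set UZ : (Fin T → X1) → ℝ := {x1 | ∀ s < t, Zseq f1 (pad x1) s = zs s}.indicator 1 with hUZ
    rw [belM, cPr, div_eq_iff hposZ.ne']
    rw [Pr_eq_sum p (fun ω => UZ ω.2.1 * {n | memZ h1 l1 t zs n = m}.indicator 1 ω.2.2.2.1),
      Pr_eq_sum p (fun ω => UZ ω.2.1 * 1) {ω | ∀ s < t, Z1f T f1 ω s = zs s}]
    · rw [hnoise (fun _ x1 => UZ x1) (fun _ => 1),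
        hnoise (fun _ x1 => UZ x1) ({n | memZ h1 l1 t zs n = m}.indicator 1)]
      simp only [mul_one, sum_noise q1 (fun t => (hq1 t).2)]
      rw [mul_comm]
    · intro ω
      simp only [hUZ, Set.indicator_apply, Set.mem_ofPred_eq, Z1f, mul_one, Pi.one_apply]
    · intro ω
      simp only [hUZ, Set.indicator_apply, Set.mem_inter_iff, Set.mem_ofPred_eq, Pi.one_apply,
        Z1f]
      by_cases h : ∀ s < t, Zseq f1 (pad ω.2.1) s = zs s
      · have : M1f T h1 f1 l1 ω t = memZ h1 l1 t zs ω.2.2.2.1 :=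
          Mseq_congr _ _ fun s hs => by simp only [Y1f, Z1f, h s hs]
        rw [this, if_pos h, one_mul]
        exact if_congr (and_iff_left h) rfl rfl
      · simp [h]
  have hnum : ∑ ω, F.indicator
      (fun ω' => p ω' * ρ t (Xst T ω' t) (estf T h1 h2 f1 f2 l1 l2 g ω' t)) ω =
      ∑ a, α a * ∑ m, β m * ∑ v, q1 t v *
        innerD T init2 K2 q2 h2 ρ f2 g l2 t (xs t) a (h1 t (zs t) v) m := by
    have h1' := sum_jointP T pA init1 K1 init2 K2 q1 q2 (fun _ x1 => U x1)
      (fun a x2 n1 n2 => ρ t (xs t, pad x2 t, a)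
        (g t (h1 t (zs t) (pad n1 t)) (h2 t (Zseq f2 (pad x2) t) (pad n2 t))
          (memZ h1 l1 t zs n1)
          (Mseq l2 (fun s => h2 s (Zseq f2 (pad x2) s) (pad n2 s)) t)))
    refine Eq.trans (sum_congr rfl fun ω _ => ?_) (h1'.trans (sum_congr rfl fun a _ => ?_))
    · by_cases h : ω ∈ F
      · have hx : ∀ s ≤ t, pad ω.2.1 s = xs s := h
        have hU1 : U ω.2.1 = 1 := Set.indicator_of_mem (s := {x1 | _}) hx 1
        have hM : M1f T h1 f1 l1 ω t = memZ h1 l1 t zs ω.2.2.2.1 :=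
          Mseq_congr _ _ fun s hs => by simp only [Y1f, Z1f, hz _ hx s hs.le]
        have hY : Y1f T h1 f1 ω t = h1 t (zs t) (pad ω.2.2.2.1 t) := by
          simp only [Y1f, Z1f, hz _ hx t le_rfl]
        rw [Set.indicator_of_mem h, hU1, one_mul, Xst, hx t le_rfl, estf, hM, hY]
        rfl
      · have hU0 : U ω.2.1 = 0 := Set.indicator_of_notMem (s := {x1 | _}) h 1
        rw [Set.indicator_of_notMem h, hU0, zero_mul, mul_zero]
    · congr 1
      have := sum_noise_mem q1 (fun t => (hq1 t).2) ⟨t, ht⟩ (memZ h1 l1 t zs)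
        (memZ_congr h1 l1 ⟨t, ht⟩ zs)
        (fun v m => innerD T init2 K2 q2 h2 ρ f2 g l2 t (xs t) a (h1 t (zs t) v) m)
      rw [← this]
      refine sum_congr rfl fun n1 _ => ?_
      simp only [innerD, pad, dif_pos ht]
  rw [cExp, hnum, sum_div]
  refine sum_congr rfl fun a _ => ?_
  simp only [hbelA, hbelM]
  ring

end MTC
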